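/- arXiv:2003.02030 — 2 statements merged into one kernel-verified Lean document; each statement's English description precedes it below -/
import Mathlib

section
/- Let X and Y be measurable spaces, ν̂ a probability kernel from Y to X, and π a probability measure on X × Y. Suppose J₀ is a ν̂-Jacobian of π, i.e. ∬ f(x,y) J₀(x,y) dν̂^y(x) dπ(x,y) = ∫ f dπ for every bounded measurable f : X × Y → ℝ. Then H^{ν̂}(π) = −∫ log(J₀) dπ; that is, the supremum defining −H^{ν̂}(π) over ν̂-Jacobians is attained at J₀. -/
open MeasureTheory ENNReal ProbabilityTheory

noncomputable section
open scoped Classical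

/-- The extended-real integral `∫ f⁺ dμ − ∫ f⁻ dμ`, valued in `EReal`. -/
def eInt {α : Type*} [MeasurableSpace α] (μ : Measure α) (f : α → ℝ) : EReal :=
  ((∫⁻ x, ENNReal.ofReal (f x) ∂μ : ℝ≥0∞) : EReal)
    - ((∫⁻ x, ENNReal.ofReal (-f x) ∂μ : ℝ≥0∞) : EReal)

/-- The extended integral of `f` with respect to `μ` is well defined (not `+∞ − ∞`). -/
def IntWellDef {α : Type*} [MeasurableSpace α] (μ : Measure α) (f : α → ℝ) : Prop :=
  (∫⁻ x, ENNReal.ofReal (f x) ∂μ ≠ ⊤) ∨ (∫⁻ x, ENNReal.ofReal (-f x) ∂μ ≠ ⊤)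

/-- Kullback–Leibler divergence `D_KL(μ | ν) = ∫ log (dμ/dν) dμ` if `μ ≪ ν`, `+∞` otherwise. -/
def KL {α : Type*} [MeasurableSpace α] (μ ν : Measure α) : EReal :=
  if μ ≪ ν then eInt μ (fun x => Real.log ((μ.rnDeriv ν x).toReal)) else ⊤

/-- `S^ν(P) = −sup{∫ c dP : c measurable, ∫ e^c dν = 1, ∫ c dP well defined}`. -/
def SEnt {X : Type*} [MeasurableSpace X] (ν P : Measure X) : EReal :=
  - sSup { r : EReal | ∃ c : X → ℝ, Measurable c ∧ (∫ x, Real.exp (c x) ∂ν) = 1 ∧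
      IntWellDef P c ∧ r = eInt P c }

/-- `H^{ν̂}(π)`: entropy of `π` relative to the probability kernel `ν̂ = κ`, i.e. minus the
supremum of `∫ c dπ` over `κ`-normalized measurable functions with well-defined integral. -/
def Hker {X Y : Type*} [MeasurableSpace X] [MeasurableSpace Y]
    (κ : Kernel Y X) (π : Measure (X × Y)) : EReal :=
  - sSup { r : EReal | ∃ c : X × Y → ℝ, Measurable c ∧
      (∀ y, (∫ x, Real.exp (c (x, y)) ∂(κ y)) = 1) ∧ IntWellDef π c ∧ r = eInt π c }

/-- `H^ν(π)`: entropy of `π` relative to an a priori probability `ν` on `X`. -/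
def Hnu {X Y : Type*} [MeasurableSpace X] [MeasurableSpace Y]
    (ν : Measure X) (π : Measure (X × Y)) : EReal :=
  - sSup { r : EReal | ∃ c : X × Y → ℝ, Measurable c ∧
      (∀ y, (∫ x, Real.exp (c (x, y)) ∂ν) = 1) ∧ IntWellDef π c ∧ r = eInt π c }

/-- The probability `ν̂ dQ` on `X × Y`, defined by
`∫ f d(ν̂ dQ) = ∫_Y ∫_X f(x,y) dν̂^y(x) dQ(y)`. -/
def kernMeas {X Y : Type*} [MeasurableSpace X] [MeasurableSpace Y]
    (κ : Kernel Y X) (Q : Measure Y) : Measure (X × Y) :=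
  (Q.compProd κ).map Prod.swap

/-! The test-function identity says that `π` has density `J₀` with respect to `ν̂ dQ`, where `Q`
is the `Y`-marginal of `π`; in particular `J₀ > 0` holds `π`-almost everywhere.  The upper bound on
the supremum is then Gibbs' inequality: `c - log J₀ ≤ e^c / J₀ - 1`, and the `π`-integral of
`e^c / J₀` is at most the `ν̂ dQ`-integral of `e^c`, which equals that of `J₀`.

Since `J₀` may vanish, `log J₀` need not be an admissible `c`.  One therefore competes with
`log (a J₀ + (1 - a) G)` for a Jacobian `G` bounded away from zero: it is bounded below, it is at
least `log J₀ + log a` almost everywhere, and `log a → 0` as `a → 1`. -/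

section ExtendedIntegral

variable {α : Type*} [MeasurableSpace α] {μ : Measure α} {f g h : α → ℝ}

lemma integrable_of_lintegral_ofReal_ne_top (hf : AEMeasurable f μ)
    (hpos : ∫⁻ x, ENNReal.ofReal (f x) ∂μ ≠ ⊤) (hneg : ∫⁻ x, ENNReal.ofReal (-f x) ∂μ ≠ ⊤) :
    Integrable f μ := by
  have hsub := (integrable_toReal_of_lintegral_ne_top hf.ennreal_ofReal hpos).sub
    (integrable_toReal_of_lintegral_ne_top hf.neg.ennreal_ofReal hneg)
  refine hsub.congr (.of_forall fun x => ?_)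
  simp only [Pi.sub_apply, Pi.neg_apply, toReal_ofReal', max_zero_sub_max_neg_zero_eq_self]

lemma eInt_eq_integral (hf : Integrable f μ) : eInt μ f = ((∫ x, f x ∂μ : ℝ) : EReal) := by
  rw [eInt, integral_eq_lintegral_pos_part_sub_lintegral_neg_part hf, EReal.coe_sub,
    EReal.coe_ennreal_toReal hf.lintegral_lt_top.ne,
    EReal.coe_ennreal_toReal hf.fun_neg.lintegral_lt_top.ne]

theorem eInt_le_eInt_add (hf : AEMeasurable f μ) (hg : AEMeasurable g μ)
    (hgneg : ∫⁻ x, ENNReal.ofReal (-g x) ∂μ ≠ ⊤) (hh : Integrable h μ)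
    (hle : ∀ᵐ x ∂μ, f x ≤ g x + h x) :
    eInt μ f ≤ eInt μ g + ((∫ x, h x ∂μ : ℝ) : EReal) := by
  by_cases hgpos : ∫⁻ x, ENNReal.ofReal (g x) ∂μ = ⊤
  · have hgtop : eInt μ g = ⊤ := by
      rw [eInt, hgpos, EReal.coe_ennreal_top, EReal.top_sub (by simpa using hgneg)]
    rw [hgtop, EReal.top_add_coe]
    exact le_top
  by_cases hfneg : ∫⁻ x, ENNReal.ofReal (-f x) ∂μ = ⊤
  · simp [eInt, hfneg]
  have hgint : Integrable g μ := integrable_of_lintegral_ofReal_ne_top hg hgpos hgneg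
  have hfpos : ∫⁻ x, ENNReal.ofReal (f x) ∂μ ≠ ⊤ :=
    ne_top_of_le_ne_top (hgint.add hh).lintegral_lt_top.ne
      (lintegral_mono_ae (hle.mono fun _ => ENNReal.ofReal_le_ofReal))
  have hfint : Integrable f μ := integrable_of_lintegral_ofReal_ne_top hf hfpos hfneg
  rw [eInt_eq_integral hfint, eInt_eq_integral hgint, ← EReal.coe_add, ← integral_add hgint hh]
  exact_mod_cast integral_mono_ae hfint (hgint.add hh) hle

lemma lintegral_ofReal_neg_log_ne_top_of_le [IsFiniteMeasure μ] {ε : ℝ} (hε : 0 < ε)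
    (hf : ∀ᵐ x ∂μ, ε ≤ f x) : ∫⁻ x, ENNReal.ofReal (-Real.log (f x)) ∂μ ≠ ⊤ := by
  refine ne_top_of_le_ne_top (integrable_const (-Real.log ε)).lintegral_lt_top.ne
    (lintegral_mono_ae (hf.mono fun x hx => ENNReal.ofReal_le_ofReal ?_))
  exact neg_le_neg (Real.log_le_log hε hx)

end ExtendedIntegral

section Density

variable {α : Type*} [MeasurableSpace α] {μ : Measure α} {J : α → ℝ}

lemma ae_pos_withDensity_ofReal (hJ : Measurable J) :
    ∀ᵐ x ∂μ.withDensity fun x => ENNReal.ofReal (J x), 0 < J x := by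
  rw [ae_withDensity_iff hJ.ennreal_ofReal]
  exact .of_forall fun x hx => ofReal_pos.1 (pos_iff_ne_zero.2 hx)

lemma lintegral_ofReal_div_withDensity_le (hJ : Measurable J) (g : α → ℝ) :
    ∫⁻ x, ENNReal.ofReal (g x / J x) ∂μ.withDensity (fun x => ENNReal.ofReal (J x)) ≤
      ∫⁻ x, ENNReal.ofReal (g x) ∂μ := by
  refine (lintegral_withDensity_le_lintegral_mul μ hJ.ennreal_ofReal _).trans
    (lintegral_mono fun x => ?_)
  rcases le_or_gt (J x) 0 with hx | hx
  · simp [ofReal_of_nonpos hx]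
  · rw [Pi.mul_apply, ← ofReal_mul hx.le, mul_div_cancel₀ _ hx.ne']

lemma lintegral_ofReal_neg_log_withDensity_ne_top [IsFiniteMeasure μ] (hJ : Measurable J) :
    ∫⁻ x, ENNReal.ofReal (-Real.log (J x)) ∂μ.withDensity (fun x => ENNReal.ofReal (J x)) ≠ ⊤ := by
  refine ne_top_of_le_ne_top (integrable_const (1 : ℝ)).lintegral_lt_top.ne
    (le_trans (lintegral_mono_ae ?_) (lintegral_ofReal_div_withDensity_le hJ fun _ => 1))
  filter_upwards [ae_pos_withDensity_ofReal hJ] with x hx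
  refine ENNReal.ofReal_le_ofReal ?_
  rw [one_div]
  linarith [Real.one_sub_inv_le_log_of_pos hx]

lemma integrable_div_withDensity {g : α → ℝ} (hJ : Measurable J) (hg : Measurable g)
    (hg0 : ∀ x, 0 ≤ g x) (hgfin : ∫⁻ x, ENNReal.ofReal (g x) ∂μ ≠ ⊤) :
    Integrable (fun x => g x / J x) (μ.withDensity fun x => ENNReal.ofReal (J x)) := by
  refine (lintegral_ofReal_ne_top_iff_integrable (hg.div hJ).aestronglyMeasurable
    ((ae_pos_withDensity_ofReal hJ).mono fun x hx => div_nonneg (hg0 x) hx.le)).1 ?_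
  exact ne_top_of_le_ne_top hgfin (lintegral_ofReal_div_withDensity_le hJ g)

lemma integral_div_withDensity_le {g : α → ℝ} (hJ : Measurable J) (hg : Measurable g)
    (hg0 : ∀ x, 0 ≤ g x) (hgfin : ∫⁻ x, ENNReal.ofReal (g x) ∂μ ≠ ⊤) :
    ∫ x, g x / J x ∂μ.withDensity (fun x => ENNReal.ofReal (J x)) ≤
      (∫⁻ x, ENNReal.ofReal (g x) ∂μ).toReal := by
  rw [integral_eq_lintegral_of_nonneg_ae
    ((ae_pos_withDensity_ofReal hJ).mono fun x hx => div_nonneg (hg0 x) hx.le)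
    (hg.div hJ).aestronglyMeasurable]
  exact toReal_mono hgfin (lintegral_ofReal_div_withDensity_le hJ g)

theorem eInt_le_eInt_log_withDensity [IsFiniteMeasure μ] {c : α → ℝ} (hJ : Measurable J)
    (hJfin : ∫⁻ x, ENNReal.ofReal (J x) ∂μ ≠ ⊤) (hc : Measurable c)
    (hle : ∫⁻ x, ENNReal.ofReal (Real.exp (c x)) ∂μ ≤ ∫⁻ x, ENNReal.ofReal (J x) ∂μ) :
    eInt (μ.withDensity fun x => ENNReal.ofReal (J x)) c ≤
      eInt (μ.withDensity fun x => ENNReal.ofReal (J x)) (fun x => Real.log (J x)) := by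
  set π := μ.withDensity fun x => ENNReal.ofReal (J x) with hπ
  have : IsFiniteMeasure π := isFiniteMeasure_withDensity hJfin
  have hexp_nonneg (x : α) : 0 ≤ Real.exp (c x) := (Real.exp_pos _).le
  have hexp_fin : ∫⁻ x, ENNReal.ofReal (Real.exp (c x)) ∂μ ≠ ⊤ := ne_top_of_le_ne_top hJfin hle
  have hint : Integrable (fun x => Real.exp (c x) / J x) π :=
    integrable_div_withDensity hJ hc.exp hexp_nonneg hexp_fin
  have hmass : π.real Set.univ = (∫⁻ x, ENNReal.ofReal (J x) ∂μ).toReal := by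
    rw [measureReal_def, hπ, withDensity_apply _ .univ, setLIntegral_univ]
  have hintegral : ∫ x, (Real.exp (c x) / J x - 1) ∂π ≤ 0 := by
    rw [integral_sub hint (integrable_const _), integral_const, smul_eq_mul, mul_one, sub_nonpos,
      hmass]
    exact (integral_div_withDensity_le hJ hc.exp hexp_nonneg hexp_fin).trans (toReal_mono hJfin hle)
  have hpointwise : ∀ᵐ x ∂π, c x ≤ Real.log (J x) + (Real.exp (c x) / J x - 1) := by
    filter_upwards [ae_pos_withDensity_ofReal hJ] with x hx
    have hlog := Real.log_le_sub_one_of_pos (div_pos (Real.exp_pos (c x)) hx)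
    rw [Real.log_div (Real.exp_pos _).ne' hx.ne', Real.log_exp] at hlog
    linarith
  calc eInt π c
      ≤ eInt π (fun x => Real.log (J x)) + ((∫ x, (Real.exp (c x) / J x - 1) ∂π : ℝ) : EReal) :=
        eInt_le_eInt_add hc.aemeasurable hJ.log.aemeasurable
          (lintegral_ofReal_neg_log_withDensity_ne_top hJ) (hint.sub (integrable_const _))
          hpointwise
    _ ≤ eInt π (fun x => Real.log (J x)) :=
        add_le_of_nonpos_right (by exact_mod_cast hintegral)

end Density

section Interpolation

variable {α : Type*} [MeasurableSpace α] {π : Measure α} [IsFiniteMeasure π] {J G : α → ℝ} {δ : ℝ}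

lemma eInt_log_le_eInt_log_convexCombo_add (hJ : Measurable J) (hG : Measurable G)
    (hJpos : ∀ᵐ x ∂π, 0 < J x) (hδ : 0 < δ) (hGδ : ∀ᵐ x ∂π, δ ≤ G x) {a : ℝ} (ha0 : 0 < a)
    (ha1 : a < 1) :
    eInt π (fun x => Real.log (J x)) ≤
      eInt π (fun x => Real.log (a * J x + (1 - a) * G x)) +
        ((-Real.log a * π.real Set.univ : ℝ) : EReal) := by
  have hbelow : ∀ᵐ x ∂π, (1 - a) * δ ≤ a * J x + (1 - a) * G x := by
    filter_upwards [hJpos, hGδ] with x hJx hGx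
    nlinarith [mul_pos ha0 hJx]
  have hpointwise : ∀ᵐ x ∂π,
      Real.log (J x) ≤ Real.log (a * J x + (1 - a) * G x) + -Real.log a := by
    filter_upwards [hJpos, hGδ] with x hJx hGx
    have hlog : Real.log (a * J x) ≤ Real.log (a * J x + (1 - a) * G x) :=
      Real.log_le_log (mul_pos ha0 hJx)
        (le_add_of_nonneg_right (mul_nonneg (sub_nonneg.2 ha1.le) (hδ.le.trans hGx)))
    rw [Real.log_mul ha0.ne' hJx.ne'] at hlog
    linarith
  have h := eInt_le_eInt_add hJ.log.aemeasurable
    ((hJ.const_mul a).add (hG.const_mul (1 - a))).log.aemeasurable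
    (lintegral_ofReal_neg_log_ne_top_of_le (mul_pos (sub_pos.2 ha1) hδ) hbelow)
    (integrable_const _) hpointwise
  rwa [integral_const, smul_eq_mul, mul_comm] at h

theorem eInt_log_le_of_forall_convexCombo_le (hJ : Measurable J) (hG : Measurable G)
    (hJpos : ∀ᵐ x ∂π, 0 < J x) (hδ : 0 < δ) (hGδ : ∀ᵐ x ∂π, δ ≤ G x) {s : EReal}
    (hs : ∀ a : ℝ, 0 < a → a < 1 →
      eInt π (fun x => Real.log (a * J x + (1 - a) * G x)) ≤ s) :
    eInt π (fun x => Real.log (J x)) ≤ s := by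
  have hcont : ContinuousAt
      (fun a : ℝ => s + ((-Real.log a * π.real Set.univ : ℝ) : EReal)) 1 := by
    have herr : ContinuousAt (fun a : ℝ => ((-Real.log a * π.real Set.univ : ℝ) : EReal)) 1 :=
      continuous_coe_real_ereal.continuousAt.comp
        ((Real.continuousAt_log one_ne_zero).neg.mul continuousAt_const)
    exact (EReal.continuousAt_add (.inr (EReal.coe_ne_bot _)) (.inr (EReal.coe_ne_top _))).comp
      (continuousAt_const.prodMk herr)
  have hlim : Filter.Tendsto (fun a : ℝ => s + ((-Real.log a * π.real Set.univ : ℝ) : EReal))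
      (nhdsWithin 1 (Set.Iio 1)) (nhds s) := by
    simpa using hcont.tendsto.mono_left nhdsWithin_le_nhds
  refine ge_of_tendsto hlim ?_
  filter_upwards [Ioo_mem_nhdsLT zero_lt_one] with a ha
  exact (eInt_log_le_eInt_log_convexCombo_add hJ hG hJpos hδ hGδ ha.1 ha.2).trans
    (add_le_add_left (hs a ha.1 ha.2) _)

end Interpolation

section Kernel

variable {X Y : Type*} [MeasurableSpace X] [MeasurableSpace Y] {κ : Kernel Y X} {Q : Measure Y}

lemma lintegral_kernMeas [IsSFiniteKernel κ] [SFinite Q] {f : X × Y → ℝ≥0∞} (hf : Measurable f) :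
    ∫⁻ p, f p ∂kernMeas κ Q = ∫⁻ y, ∫⁻ x, f (x, y) ∂κ y ∂Q := by
  rw [kernMeas, lintegral_map hf measurable_swap]
  exact Measure.lintegral_compProd (hf.comp measurable_swap)

lemma integral_kernMeas [IsSFiniteKernel κ] [SFinite Q] {f : X × Y → ℝ}
    (hf : Integrable f (kernMeas κ Q)) :
    ∫ p, f p ∂kernMeas κ Q = ∫ y, ∫ x, f (x, y) ∂κ y ∂Q := by
  have hswap : Integrable (f ∘ Prod.swap) (Q.compProd κ) := hf.comp_measurable measurable_swap
  calc ∫ p, f p ∂kernMeas κ Q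
      = ∫ q, f q.swap ∂Q.compProd κ := integral_map_equiv MeasurableEquiv.prodComm f
    _ = ∫ y, ∫ x, f (x, y) ∂κ y ∂Q := Measure.integral_compProd hswap

instance isFiniteMeasure_kernMeas [IsFiniteKernel κ] [IsFiniteMeasure Q] :
    IsFiniteMeasure (kernMeas κ Q) := by
  unfold kernMeas
  infer_instance

/-- A `κ`-Jacobian: a nonnegative measurable function of `(x, y)` whose integral in `x` against
`κ y` is `1` for every `y`. -/
structure IsKernelJacobian (κ : Kernel Y X) (J : X × Y → ℝ) : Prop where
  measurable : Measurable J
  nonneg : ∀ p, 0 ≤ J p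
  integral_eq_one : ∀ y, ∫ x, J (x, y) ∂κ y = 1

/-- The measure `J ν̂ dQ` on `X × Y` having density `J` with respect to `ν̂ dQ`, where `ν̂ = κ`.
Negative values of `J` are replaced by `0`. -/
def jacobianMeasure (κ : Kernel Y X) (Q : Measure Y) (J : X × Y → ℝ) : Measure (X × Y) :=
  (kernMeas κ Q).withDensity fun p => ENNReal.ofReal (J p)

namespace IsKernelJacobian

variable {J G : X × Y → ℝ}

lemma integrable_section (hJ : IsKernelJacobian κ J) (y : Y) :
    Integrable (fun x => J (x, y)) (κ y) :=
  integrable_of_integral_eq_one (hJ.integral_eq_one y)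

lemma lintegral_section (hJ : IsKernelJacobian κ J) (y : Y) :
    ∫⁻ x, ENNReal.ofReal (J (x, y)) ∂κ y = 1 := by
  rw [← ofReal_integral_eq_lintegral_ofReal (hJ.integrable_section y)
    (.of_forall fun _ => hJ.nonneg _), hJ.integral_eq_one, ofReal_one]

lemma lintegral_ofReal_kernMeas [IsSFiniteKernel κ] [SFinite Q] (hJ : IsKernelJacobian κ J) :
    ∫⁻ p, ENNReal.ofReal (J p) ∂kernMeas κ Q = Q Set.univ := by
  simp only [lintegral_kernMeas hJ.measurable.ennreal_ofReal, hJ.lintegral_section,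
    lintegral_one]

lemma integrable_kernMeas [IsSFiniteKernel κ] [IsFiniteMeasure Q] (hJ : IsKernelJacobian κ J) :
    Integrable J (kernMeas κ Q) := by
  rw [← lintegral_ofReal_ne_top_iff_integrable hJ.measurable.aestronglyMeasurable
    (.of_forall hJ.nonneg), hJ.lintegral_ofReal_kernMeas]
  exact measure_ne_top Q _

lemma convexCombo (hJ : IsKernelJacobian κ J) (hG : IsKernelJacobian κ G) {a : ℝ} (ha0 : 0 ≤ a)
    (ha1 : a ≤ 1) : IsKernelJacobian κ fun p => a * J p + (1 - a) * G p where
  measurable := (hJ.measurable.const_mul a).add (hG.measurable.const_mul (1 - a))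
  nonneg p := add_nonneg (mul_nonneg ha0 (hJ.nonneg p))
    (mul_nonneg (sub_nonneg.2 ha1) (hG.nonneg p))
  integral_eq_one y := by
    rw [integral_add ((hJ.integrable_section y).const_mul a)
      ((hG.integrable_section y).const_mul (1 - a)), integral_const_mul, integral_const_mul,
      hJ.integral_eq_one, hG.integral_eq_one]
    ring

lemma measureReal_univ_pos [IsFiniteKernel κ] (hJ : IsKernelJacobian κ J) (y : Y) :
    0 < (κ y).real Set.univ := by
  refine measureReal_nonneg.lt_of_ne' fun hzero => ?_
  have hκ : κ y = 0 := Measure.measure_univ_eq_zero.1 ((measureReal_eq_zero_iff).1 hzero)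
  simpa [hκ] using hJ.integral_eq_one y

theorem exists_bounded_below [IsFiniteKernel κ] (hJ : IsKernelJacobian κ J) :
    ∃ G, IsKernelJacobian κ G ∧ ∃ δ > 0, ∀ p, δ ≤ G p := by
  obtain ⟨C, hC, hκC⟩ := IsFiniteKernel.exists_univ_le (κ := κ)
  have hmass_le (y : Y) : (κ y).real Set.univ ≤ C.toReal + 1 :=
    (toReal_mono hC.ne (hκC y)).trans (le_add_of_nonneg_right zero_le_one)
  refine ⟨fun p => ((κ p.2).real Set.univ)⁻¹, ⟨?_, fun _ => inv_nonneg.2 measureReal_nonneg, ?_⟩,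
    (C.toReal + 1)⁻¹, by positivity, fun p => inv_anti₀ (hJ.measureReal_univ_pos p.2) (hmass_le _)⟩
  · exact ((κ.measurable_coe .univ).ennreal_toReal.comp measurable_snd).inv
  · intro y
    simp only [integral_const, smul_eq_mul, mul_inv_cancel₀ (hJ.measureReal_univ_pos y).ne']

theorem eq_jacobianMeasure [IsSFiniteKernel κ] {π : Measure (X × Y)} [IsFiniteMeasure π]
    (hJ : IsKernelJacobian κ J)
    (hπ : ∀ f : X × Y → ℝ, Measurable f → (∃ C, ∀ p, |f p| ≤ C) →
      (∫ p, (∫ x, f (x, p.2) * J (x, p.2) ∂κ p.2) ∂π) = ∫ p, f p ∂π) :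
    π = jacobianMeasure κ π.snd J := by
  ext A hA
  have hind : Measurable (A.indicator fun _ => (1 : ℝ)) := measurable_const.indicator hA
  have hmul (p : X × Y) : A.indicator (fun _ => (1 : ℝ)) p * J p = A.indicator J p := by
    rw [← Set.indicator_mul_left, funext fun p => one_mul (J p)]
  have hfiber : StronglyMeasurable fun y => ∫ x, A.indicator J (x, y) ∂κ y :=
    StronglyMeasurable.integral_kernel_prod_right'
      ((hJ.measurable.indicator hA).comp measurable_swap).stronglyMeasurable
  have hJint : Integrable J (kernMeas κ π.snd) := hJ.integrable_kernMeas
  have hreal : ∫ p in A, J p ∂kernMeas κ π.snd = π.real A :=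
    calc ∫ p in A, J p ∂kernMeas κ π.snd
        = ∫ y, ∫ x, A.indicator J (x, y) ∂κ y ∂π.snd := by
          rw [← integral_indicator hA, integral_kernMeas (hJint.indicator hA)]
      _ = ∫ p, ∫ x, A.indicator J (x, p.2) ∂κ p.2 ∂π :=
          integral_map measurable_snd.aemeasurable hfiber.aestronglyMeasurable
      _ = ∫ p, A.indicator (fun _ => (1 : ℝ)) p ∂π := by
          simp only [← hmul]
          exact hπ _ hind ⟨1, fun p => by by_cases hp : p ∈ A <;> simp [hp]⟩
      _ = π.real A := by rw [integral_indicator_const _ hA, smul_eq_mul, mul_one]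
  rw [jacobianMeasure, withDensity_apply _ hA, ← ofReal_integral_eq_lintegral_ofReal
    hJint.integrableOn (.of_forall hJ.nonneg), hreal, ofReal_measureReal]

end IsKernelJacobian

section Entropy

variable {J : X × Y → ℝ} {π : Measure (X × Y)}

lemma neg_Hker_le {s : EReal}
    (hs : ∀ c, Measurable c → IsKernelJacobian κ (fun p => Real.exp (c p)) → eInt π c ≤ s) :
    -Hker κ π ≤ s := by
  rw [Hker, neg_neg]
  refine sSup_le ?_
  rintro _ ⟨c, hc, hnorm, -, rfl⟩
  exact hs c hc ⟨hc.exp, fun _ => (Real.exp_pos _).le, hnorm⟩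

lemma IsKernelJacobian.eInt_log_le_neg_Hker (hJ : IsKernelJacobian κ J) (hpos : ∀ p, 0 < J p)
    (hwd : IntWellDef π fun p => Real.log (J p)) :
    eInt π (fun p => Real.log (J p)) ≤ -Hker κ π := by
  rw [Hker, neg_neg]
  refine le_sSup ⟨_, hJ.measurable.log, fun y => ?_, hwd, rfl⟩
  simp only [Real.exp_log (hpos _), hJ.integral_eq_one]

variable [IsFiniteKernel κ] [IsFiniteMeasure Q]

theorem IsKernelJacobian.neg_Hker_jacobianMeasure_le (hJ : IsKernelJacobian κ J) :
    -Hker κ (jacobianMeasure κ Q J) ≤ eInt (jacobianMeasure κ Q J) fun p => Real.log (J p) :=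
  neg_Hker_le fun _ hc hexp => eInt_le_eInt_log_withDensity hJ.measurable
    (hJ.lintegral_ofReal_kernMeas.trans_ne (measure_ne_top Q _)) hc
    (hexp.lintegral_ofReal_kernMeas.trans hJ.lintegral_ofReal_kernMeas.symm).le

theorem IsKernelJacobian.eInt_log_jacobianMeasure_le_neg_Hker (hJ : IsKernelJacobian κ J) :
    eInt (jacobianMeasure κ Q J) (fun p => Real.log (J p)) ≤ -Hker κ (jacobianMeasure κ Q J) := by
  have : IsFiniteMeasure (jacobianMeasure κ Q J) :=
    isFiniteMeasure_withDensity (hJ.lintegral_ofReal_kernMeas.trans_ne (measure_ne_top Q _))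
  obtain ⟨G, hG, δ, hδ, hGδ⟩ := hJ.exists_bounded_below
  refine eInt_log_le_of_forall_convexCombo_le (π := jacobianMeasure κ Q J) hJ.measurable
    hG.measurable (ae_pos_withDensity_ofReal hJ.measurable) hδ (.of_forall hGδ) fun a ha0 ha1 => ?_
  have hε : 0 < (1 - a) * δ := mul_pos (sub_pos.2 ha1) hδ
  have hbelow (p : X × Y) : (1 - a) * δ ≤ a * J p + (1 - a) * G p :=
    le_add_of_nonneg_of_le (mul_nonneg ha0.le (hJ.nonneg p))
      (mul_le_mul_of_nonneg_left (hGδ p) (sub_nonneg.2 ha1.le))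
  exact (hJ.convexCombo hG ha0.le ha1.le).eInt_log_le_neg_Hker (fun p => hε.trans_le (hbelow p))
    (.inr (lintegral_ofReal_neg_log_ne_top_of_le hε (.of_forall hbelow)))

end Entropy

end Kernel

theorem statement5_general {X Y : Type*} [MeasurableSpace X] [MeasurableSpace Y]
    (κ : Kernel Y X) [IsFiniteKernel κ]
    (pi : Measure (X × Y)) [IsFiniteMeasure pi]
    (J₀ : X × Y → ℝ) (hm : Measurable J₀) (h0 : ∀ p, 0 ≤ J₀ p)
    (hnorm : ∀ y, (∫ x, J₀ (x, y) ∂(κ y)) = 1)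
    (hjac : ∀ f : X × Y → ℝ, Measurable f → (∃ C, ∀ p, |f p| ≤ C) →
      (∫ p, (∫ x, f (x, p.2) * J₀ (x, p.2) ∂(κ p.2)) ∂pi) = ∫ p, f p ∂pi) :
    Hker κ pi = - eInt pi (fun p => Real.log (J₀ p)) := by
  have hJ : IsKernelJacobian κ J₀ := ⟨hm, h0, hnorm⟩
  rw [hJ.eq_jacobianMeasure hjac, ← neg_neg (Hker κ _)]
  exact congrArg _ (hJ.neg_Hker_jacobianMeasure_le.antisymm hJ.eInt_log_jacobianMeasure_le_neg_Hker)

/-- if `J₀` is a `ν̂`-Jacobian of `π`, i.e. a `ν̂`-Jacobian such that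
`∬ f(x,y) J₀(x,y) dν̂^y(x) dπ(x,y) = ∫ f dπ` for every bounded measurable `f`, then
`H^{ν̂}(π) = −∫ log J₀ dπ`: the supremum defining `−H^{ν̂}(π)` is attained at `J₀`. -/
theorem statement5 {X Y : Type*} [MeasurableSpace X] [MeasurableSpace Y]
    (κ : Kernel Y X) [IsMarkovKernel κ]
    (pi : Measure (X × Y)) [IsProbabilityMeasure pi]
    (J₀ : X × Y → ℝ) (hm : Measurable J₀) (h0 : ∀ p, 0 ≤ J₀ p)
    (hnorm : ∀ y, (∫ x, J₀ (x, y) ∂(κ y)) = 1)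
    (hjac : ∀ f : X × Y → ℝ, Measurable f → (∃ C, ∀ p, |f p| ≤ C) →
      (∫ p, (∫ x, f (x, p.2) * J₀ (x, p.2) ∂(κ p.2)) ∂pi) = ∫ p, f p ∂pi) :
    Hker κ pi = - eInt pi (fun p => Real.log (J₀ p)) :=
  statement5_general κ pi J₀ hm h0 hnorm hjac

end
end

section
/- Let X and Y be measurable spaces, ν a probability measure on X, P a probability measure on X, and π a probability measure on X × Y with x-marginal P. If S^ν(P) and H^ν(π) are both finite, then IG(π, P) := −H^P(π) = S^ν(P) − H^ν(π). Equivalently, denoting by Q the y-marginal of π, D_KL(π | P × Q) = D_KL(π | ν × Q) − D_KL(P | ν). -/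
open MeasureTheory ENNReal ProbabilityTheory

noncomputable section
open scoped Classical

/-!
The suprema defining `S^ν(P)` and `H^ν(π)` are both Kullback–Leibler divergences. If
`∫ e^c dν = 1`, then `∫ c dμ ≤ D_KL(μ | ν)` by comparing `μ` with the tilted probability `e^c ν`.
Conversely, the test functions `c = log (s dμ/dν + (1 - s))` with `0 < s < 1` are bounded below and
nearly optimal, and `e^c ν = s μ + (1 - s) ν` lies on the segment between `μ` and `ν`. For `H^ν(π)`
the segment joins `π` and `ν × Q`, two measures with second marginal `Q`, so `e^c (ν × Q)` has
second marginal `Q` too, which is the fibrewise normalization for `Q`-almost every `y`. Hence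
`S^ν(P) = -D_KL(P | ν)` and `H^ν(π) = -D_KL(π | ν × Q)`, and the claim is the chain rule
`D_KL(π | ν × Q) = D_KL(P | ν) + D_KL(π | P × Q)`.
-/

open InformationTheory

section ExtendedIntegral

variable {α : Type*} [MeasurableSpace α] {μ : Measure α} {f g : α → ℝ}

lemma eInt_mono_ae (h : f ≤ᵐ[μ] g) : eInt μ f ≤ eInt μ g := by
  refine EReal.sub_le_sub ?_ ?_ <;> refine EReal.coe_ennreal_le_coe_ennreal_iff.2 ?_ <;>
    refine lintegral_mono_ae (h.mono fun x hx => ENNReal.ofReal_le_ofReal ?_)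
  exacts [hx, neg_le_neg hx]

lemma intWellDef_congr_ae (h : f =ᵐ[μ] g) : IntWellDef μ f ↔ IntWellDef μ g := by
  have hpos : ∫⁻ x, ENNReal.ofReal (f x) ∂μ = ∫⁻ x, ENNReal.ofReal (g x) ∂μ :=
    lintegral_congr_ae (h.fun_comp ENNReal.ofReal)
  have hneg : ∫⁻ x, ENNReal.ofReal (-f x) ∂μ = ∫⁻ x, ENNReal.ofReal (-g x) ∂μ :=
    lintegral_congr_ae (h.fun_comp fun t => ENNReal.ofReal (-t))
  rw [IntWellDef, IntWellDef, hpos, hneg]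

lemma eInt_of_integrable (hf : Integrable f μ) : eInt μ f = (∫ x, f x ∂μ : ℝ) := by
  have hpos : ∫⁻ x, ENNReal.ofReal (f x) ∂μ ≠ ⊤ := hf.lintegral_lt_top.ne
  have hneg : ∫⁻ x, ENNReal.ofReal (-f x) ∂μ ≠ ⊤ := hf.neg.lintegral_lt_top.ne
  rw [integral_eq_lintegral_pos_part_sub_lintegral_neg_part hf, EReal.coe_sub,
    EReal.coe_ennreal_toReal hpos, EReal.coe_ennreal_toReal hneg, eInt]

lemma eInt_eq_top_of_not_integrable (hf : AEStronglyMeasurable f μ)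
    (hneg : ∫⁻ x, ENNReal.ofReal (-f x) ∂μ ≠ ⊤) (hfi : ¬ Integrable f μ) : eInt μ f = ⊤ := by
  have hpos : ∫⁻ x, ENNReal.ofReal (f x) ∂μ = ⊤ := by
    by_contra hpos
    refine hfi ⟨hf, hasFiniteIntegral_iff_norm f |>.2 ?_⟩
    calc ∫⁻ x, ENNReal.ofReal ‖f x‖ ∂μ
        ≤ ∫⁻ x, ENNReal.ofReal (f x) + ENNReal.ofReal (-f x) ∂μ := lintegral_mono fun x => by
          rw [Real.norm_eq_abs, abs_eq_max_neg, ENNReal.ofReal_max]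
          exact max_le le_self_add le_add_self
      _ = ∫⁻ x, ENNReal.ofReal (f x) ∂μ + ∫⁻ x, ENNReal.ofReal (-f x) ∂μ :=
          lintegral_add_left' hf.aemeasurable.ennreal_ofReal _
      _ < ⊤ := ENNReal.add_lt_top.2 ⟨Ne.lt_top hpos, hneg.lt_top⟩
  rw [eInt, hpos, EReal.coe_ennreal_top, ← EReal.coe_ennreal_toReal hneg, EReal.top_sub_coe]

lemma lintegral_ofReal_neg_ne_top_of_ge [IsFiniteMeasure μ] {a : ℝ} (h : ∀ x, a ≤ f x) :
    ∫⁻ x, ENNReal.ofReal (-f x) ∂μ ≠ ⊤ := by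
  have hle : ∫⁻ x, ENNReal.ofReal (-f x) ∂μ ≤ ∫⁻ _, ENNReal.ofReal (-a) ∂μ :=
    lintegral_mono fun x => ENNReal.ofReal_le_ofReal (neg_le_neg (h x))
  exact ne_top_of_le_ne_top (by simp [ENNReal.mul_eq_top]) hle

lemma eInt_sub_const [IsProbabilityMeasure μ] (hf : AEStronglyMeasurable f μ)
    (hneg : ∫⁻ x, ENNReal.ofReal (-f x) ∂μ ≠ ⊤) (a : ℝ) :
    eInt μ (fun x => f x - a) = eInt μ f - a := by
  by_cases hfi : Integrable f μ
  · have hsub : Integrable (fun x => f x - a) μ := hfi.sub (integrable_const a)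
    rw [eInt_of_integrable hfi, eInt_of_integrable hsub, integral_sub hfi (integrable_const a),
      integral_const, probReal_univ, one_smul, EReal.coe_sub]
  · have hneg_sub : ∫⁻ x, ENNReal.ofReal (-(f x - a)) ∂μ ≠ ⊤ := by
      have hle : ∫⁻ x, ENNReal.ofReal (-(f x - a)) ∂μ
          ≤ ∫⁻ x, ENNReal.ofReal (-f x) + ENNReal.ofReal a ∂μ :=
        lintegral_mono fun x => by
          rw [neg_sub, sub_eq_neg_add]
          exact ENNReal.ofReal_add_le
      refine ne_top_of_le_ne_top ?_ hle
      rw [lintegral_add_right _ measurable_const, lintegral_const, measure_univ, mul_one]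
      exact ENNReal.add_ne_top.2 ⟨hneg, ENNReal.ofReal_ne_top⟩
    have hf_sub : AEStronglyMeasurable (fun x => f x - a) μ := hf.sub aestronglyMeasurable_const
    have hfi_sub : ¬ Integrable (fun x => f x - a) μ := fun h =>
      hfi ((h.add (integrable_const a)).congr (ae_of_all _ fun x => sub_add_cancel (f x) a))
    rw [eInt_eq_top_of_not_integrable hf hneg hfi, EReal.top_sub_coe,
      eInt_eq_top_of_not_integrable hf_sub hneg_sub hfi_sub]

end ExtendedIntegral

section Divergence

variable {α : Type*} [MeasurableSpace α] {μ ν : Measure α}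

lemma lintegral_ofReal_neg_llr_ne_top [SigmaFinite μ] [IsFiniteMeasure ν] (hac : μ ≪ ν) :
    ∫⁻ x, ENNReal.ofReal (-llr μ ν x) ∂μ ≠ ⊤ := by
  refine ne_top_of_le_ne_top (Measure.lintegral_rnDeriv_lt_top ν μ).ne (lintegral_mono_ae ?_)
  filter_upwards [exp_neg_llr hac] with x hx
  calc ENNReal.ofReal (-llr μ ν x) ≤ ENNReal.ofReal (Real.exp (-llr μ ν x)) :=
        ENNReal.ofReal_le_ofReal (by linarith [Real.add_one_le_exp (-llr μ ν x)])
    _ = ENNReal.ofReal (ν.rnDeriv μ x).toReal := by rw [hx]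
    _ ≤ ν.rnDeriv μ x := ENNReal.ofReal_toReal_le

variable [IsProbabilityMeasure μ] [IsProbabilityMeasure ν]

lemma integral_llr_eq_coe_klDiv (hac : μ ≪ ν) (hint : Integrable (llr μ ν) μ) :
    ((∫ x, llr μ ν x ∂μ : ℝ) : EReal) = klDiv μ ν := by
  rw [← toReal_klDiv_of_measure_eq hac (by simp only [measure_univ]),
    EReal.coe_ennreal_toReal (klDiv_ne_top hac hint)]

lemma eInt_llr (hac : μ ≪ ν) : eInt μ (llr μ ν) = klDiv μ ν := by
  by_cases hint : Integrable (llr μ ν) μ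
  · rw [eInt_of_integrable hint, integral_llr_eq_coe_klDiv hac hint]
  · rw [klDiv_of_not_integrable hint, EReal.coe_ennreal_top,
      eInt_eq_top_of_not_integrable (measurable_llr μ ν).aestronglyMeasurable
        (lintegral_ofReal_neg_llr_ne_top hac) hint]

lemma KL_eq_coe_klDiv : KL μ ν = klDiv μ ν := by
  by_cases hac : μ ≪ ν
  · exact (if_pos hac).trans (eInt_llr hac)
  · rw [KL, if_neg hac, klDiv_of_not_ac hac, EReal.coe_ennreal_top]

lemma eInt_le_klDiv {c : α → ℝ} (hc : ∫ x, Real.exp (c x) ∂ν = 1) : eInt μ c ≤ klDiv μ ν := by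
  rcases eq_or_ne (klDiv μ ν) ⊤ with htop | hfin
  · rw [htop]
    exact le_top
  obtain ⟨hac, hint⟩ := klDiv_ne_top_iff.1 hfin
  have hexp : Integrable (fun x => Real.exp (c x)) ν := integrable_of_integral_eq_one hc
  have : IsProbabilityMeasure (ν.tilted c) := isProbabilityMeasure_tilted hexp
  have hac' : μ ≪ ν.tilted c := hac.trans (absolutelyContinuous_tilted hexp)
  set g : α → ℝ := fun x => ((ν.tilted c).rnDeriv μ x).toReal
  have hg : Integrable g μ := Measure.integrable_toReal_rnDeriv
  have hg_le : ∫ x, g x ∂μ ≤ 1 := by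
    rw [Measure.integral_toReal_rnDeriv', probReal_univ]
    exact sub_le_self _ measureReal_nonneg
  -- `c = llr μ ν - llr μ (ν.tilted c)`, and `-t ≤ exp (-t) - 1` bounds the second term.
  have hc_le : c ≤ᵐ[μ] fun x => llr μ ν x + (g x - 1) := by
    filter_upwards [llr_tilted_right hac hexp, exp_neg_llr hac'] with x hllr hexp_neg
    rw [hc, Real.log_one] at hllr
    linarith [Real.add_one_le_exp (-llr μ (ν.tilted c) x)]
  have hg_sub : Integrable (fun x => g x - 1) μ := hg.sub (integrable_const 1)
  calc eInt μ c ≤ eInt μ (fun x => llr μ ν x + (g x - 1)) := eInt_mono_ae hc_le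
    _ = (∫ x, llr μ ν x + (g x - 1) ∂μ : ℝ) := eInt_of_integrable (hint.add hg_sub)
    _ ≤ (∫ x, llr μ ν x ∂μ : ℝ) := by
      rw [EReal.coe_le_coe_iff, integral_add hint hg_sub, integral_sub hg (integrable_const 1),
        integral_const, probReal_univ, one_smul]
      linarith
    _ = klDiv μ ν := integral_llr_eq_coe_klDiv hac hint

end Divergence

section Variational

variable {α : Type*} [MeasurableSpace α] {μ ν : Measure α}

/-- The measure `e^c ν`. It turns normalizations of test functions into properties of measures:
`∫ e^c dν = 1` means that `e^c ν` has mass one. -/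
def withExpDensity (ν : Measure α) (c : α → ℝ) : Measure α :=
  ν.withDensity fun x => ENNReal.ofReal (Real.exp (c x))

lemma integral_exp_eq_one_iff {c : α → ℝ} (hc : Measurable c) :
    ∫ x, Real.exp (c x) ∂ν = 1 ↔ withExpDensity ν c Set.univ = 1 := by
  rw [integral_eq_lintegral_of_nonneg_ae (ae_of_all _ fun x => (Real.exp_pos (c x)).le)
    hc.exp.aestronglyMeasurable, ENNReal.toReal_eq_one_iff, withExpDensity,
    withDensity_apply _ .univ, Measure.restrict_univ]

lemma withExpDensity_log_mix [SigmaFinite μ] [SigmaFinite ν] (hac : μ ≪ ν) {s : ℝ}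
    (hs : s ∈ Set.Ioo (0 : ℝ) 1) :
    withExpDensity ν (fun x => Real.log (s * (μ.rnDeriv ν x).toReal + (1 - s)))
      = ENNReal.ofReal s • μ + ENNReal.ofReal (1 - s) • ν := by
  have hs' : 0 < 1 - s := sub_pos.2 hs.2
  have hdens : (fun x => ENNReal.ofReal
        (Real.exp (Real.log (s * (μ.rnDeriv ν x).toReal + (1 - s)))))
      =ᵐ[ν] ENNReal.ofReal s • μ.rnDeriv ν + fun _ => ENNReal.ofReal (1 - s) := by
    filter_upwards [Measure.rnDeriv_lt_top μ ν] with x hx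
    have hnonneg : 0 ≤ s * (μ.rnDeriv ν x).toReal := mul_nonneg hs.1.le ENNReal.toReal_nonneg
    rw [Real.exp_log (by positivity), ENNReal.ofReal_add hnonneg hs'.le,
      ENNReal.ofReal_mul hs.1.le, ENNReal.ofReal_toReal hx.ne]
    rfl
  rw [withExpDensity, withDensity_congr_ae hdens, withDensity_add_right _ measurable_const,
    withDensity_smul _ (Measure.measurable_rnDeriv μ ν), Measure.withDensity_rnDeriv_eq μ ν hac,
    withDensity_const]

lemma exists_le_eInt_of_not_ac [IsFiniteMeasure μ] (hac : ¬ μ ≪ ν) (z : ℝ) :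
    ∃ c : α → ℝ, Measurable c ∧ IntWellDef μ c ∧ z ≤ eInt μ c ∧ withExpDensity ν c = ν := by
  obtain ⟨A, hA, hνA, hμA⟩ : ∃ A, MeasurableSet A ∧ ν A = 0 ∧ μ A ≠ 0 := by
    contrapose! hac
    exact Measure.AbsolutelyContinuous.mk hac
  have hμA' : μ.real A ≠ 0 := (measureReal_ne_zero_iff).2 hμA
  set c : α → ℝ := A.indicator fun _ => z / μ.real A
  have hc : Integrable c μ := (integrable_const _).indicator hA
  have hexp : (fun x => ENNReal.ofReal (Real.exp (c x))) =ᵐ[ν] 1 := by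
    filter_upwards [measure_eq_zero_iff_ae_notMem.1 hνA] with x hx
    simp [c, hx]
  refine ⟨c, measurable_const.indicator hA, .inl hc.lintegral_lt_top.ne, ?_, ?_⟩
  · rw [eInt_of_integrable hc, integral_indicator_const _ hA, smul_eq_mul,
      mul_div_cancel₀ _ hμA']
  · rw [withExpDensity, withDensity_congr_ae hexp, withDensity_one]

variable [IsProbabilityMeasure μ] [IsProbabilityMeasure ν]

lemma exists_le_eInt_of_ac (hac : μ ≪ ν) {z : ℝ} (hz : (z : EReal) < klDiv μ ν) :
    ∃ c : α → ℝ, Measurable c ∧ IntWellDef μ c ∧ z ≤ eInt μ c ∧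
      withExpDensity ν c ∈ segment ℝ≥0∞ μ ν := by
  obtain ⟨r, hzr, hr⟩ := EReal.lt_iff_exists_real_btwn.1 hz
  have hs : Real.exp (z - r) ∈ Set.Ioo (0 : ℝ) 1 :=
    ⟨Real.exp_pos _, Real.exp_lt_one_iff.2 (sub_neg.2 (EReal.coe_lt_coe_iff.1 hzr))⟩
  set s := Real.exp (z - r)
  have hs' : 0 < 1 - s := sub_pos.2 hs.2
  set c : α → ℝ := fun x => Real.log (s * (μ.rnDeriv ν x).toReal + (1 - s))
  have hbdd (x : α) : Real.log (1 - s) ≤ c x :=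
    Real.log_le_log hs' (le_add_of_nonneg_left (mul_nonneg hs.1.le ENNReal.toReal_nonneg))
  have hllr : (fun x => llr μ ν x - (r - z)) ≤ᵐ[μ] c := by
    filter_upwards [Measure.rnDeriv_pos hac, hac.ae_le (Measure.rnDeriv_lt_top μ ν)]
      with x hpos hlt
    have hpos' : 0 < (μ.rnDeriv ν x).toReal := ENNReal.toReal_pos hpos.ne' hlt.ne
    calc llr μ ν x - (r - z) = Real.log (s * (μ.rnDeriv ν x).toReal) := by
          rw [Real.log_mul hs.1.ne' hpos'.ne', Real.log_exp, llr]
          ring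
      _ ≤ c x := Real.log_le_log (mul_pos hs.1 hpos') (le_add_of_nonneg_right hs'.le)
  refine ⟨c, by fun_prop, .inr (lintegral_ofReal_neg_ne_top_of_ge hbdd), ?_,
    ENNReal.ofReal s, ENNReal.ofReal (1 - s), zero_le, zero_le, ?_,
    (withExpDensity_log_mix hac hs).symm⟩
  · calc (z : EReal) = r - (r - z : ℝ) := by rw [← EReal.coe_sub, _root_.sub_sub_cancel]
      _ ≤ eInt μ (llr μ ν) - (r - z : ℝ) :=
        EReal.sub_le_sub (hr.le.trans_eq (eInt_llr hac).symm) le_rfl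
      _ = eInt μ (fun x => llr μ ν x - (r - z)) :=
        (eInt_sub_const (measurable_llr μ ν).aestronglyMeasurable
          (lintegral_ofReal_neg_llr_ne_top hac) _).symm
      _ ≤ eInt μ c := eInt_mono_ae hllr
  · rw [← ENNReal.ofReal_add hs.1.le hs'.le, add_sub_cancel, ENNReal.ofReal_one]

lemma exists_le_eInt {z : ℝ} (hz : (z : EReal) < klDiv μ ν) :
    ∃ c : α → ℝ, Measurable c ∧ IntWellDef μ c ∧ z ≤ eInt μ c ∧
      withExpDensity ν c ∈ segment ℝ≥0∞ μ ν := by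
  by_cases hac : μ ≪ ν
  · exact exists_le_eInt_of_ac hac hz
  · obtain ⟨c, hc, hwd, hzc, hν⟩ := exists_le_eInt_of_not_ac hac z
    exact ⟨c, hc, hwd, hzc, by rw [hν]; exact right_mem_segment ℝ≥0∞ μ ν⟩

theorem SEnt_eq_neg_klDiv {X : Type*} [MeasurableSpace X] (ν P : Measure X)
    [IsProbabilityMeasure ν] [IsProbabilityMeasure P] : SEnt ν P = -(klDiv P ν : EReal) := by
  refine congrArg Neg.neg (le_antisymm (sSup_le ?_) ?_)
  · rintro _ ⟨c, -, hc, -, rfl⟩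
    exact eInt_le_klDiv hc
  · refine EReal.ge_of_forall_gt_iff_ge.1 fun z hz => ?_
    obtain ⟨c, hc, hwd, hzc, a, b, -, -, hab, hseg⟩ := exists_le_eInt hz
    have hmass : withExpDensity ν c Set.univ = 1 := by simpa [← hseg] using hab
    exact hzc.trans (le_sSup ⟨c, hc, (integral_exp_eq_one_iff hc).2 hmass, hwd, rfl⟩)

end Variational

section Kernel

variable {X Y : Type*} [MeasurableSpace X] [MeasurableSpace Y]

lemma kernMeas_const (ν : Measure X) [SFinite ν] (Q : Measure Y) [SFinite Q] :
    kernMeas (Kernel.const Y ν) Q = ν.prod Q := by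
  rw [kernMeas, Measure.compProd_const, Measure.prod_swap]

variable (κ : Kernel Y X) [IsMarkovKernel κ] (Q : Measure Y)

instance [IsProbabilityMeasure Q] : IsProbabilityMeasure (kernMeas κ Q) :=
  Measure.isProbabilityMeasure_map measurable_swap.aemeasurable

lemma map_snd_kernMeas [SFinite Q] : (kernMeas κ Q).map Prod.snd = Q := by
  rw [kernMeas, Measure.map_map measurable_snd measurable_swap]
  exact Measure.fst_compProd Q κ

variable {κ Q}

lemma map_snd_withExpDensity_kernMeas [SFinite Q] {c : X × Y → ℝ} (hc : Measurable c) :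
    (withExpDensity (kernMeas κ Q) c).map Prod.snd
      = Q.withDensity fun y => withExpDensity (κ y) (fun x => c (x, y)) Set.univ := by
  ext s hs
  have hexp : Measurable fun z => ENNReal.ofReal (Real.exp (c z)) := hc.exp.ennreal_ofReal
  have hexp_swap : Measurable fun z : Y × X => ENNReal.ofReal (Real.exp (c z.swap)) :=
    hexp.comp measurable_swap
  rw [Measure.map_apply measurable_snd hs, withExpDensity,
    withDensity_apply _ (measurable_snd hs), kernMeas,
    setLIntegral_map (measurable_snd hs) hexp measurable_swap,
    show Prod.swap ⁻¹' (Prod.snd ⁻¹' s) = s ×ˢ (Set.univ : Set X) by ext; simp,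
    Measure.setLIntegral_compProd hexp_swap hs .univ, withDensity_apply _ hs]
  simp only [withExpDensity, withDensity_apply _ MeasurableSet.univ, Prod.swap_prod_mk]

lemma integral_exp_kernMeas_eq_one [IsProbabilityMeasure Q] {c : X × Y → ℝ} (hc : Measurable c)
    (hnorm : ∀ y, ∫ x, Real.exp (c (x, y)) ∂κ y = 1) :
    ∫ z, Real.exp (c z) ∂kernMeas κ Q = 1 := by
  have hfib (y : Y) : withExpDensity (κ y) (fun x => c (x, y)) Set.univ = 1 :=
    (integral_exp_eq_one_iff (hc.comp measurable_prodMk_right)).1 (hnorm y)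
  rw [integral_exp_eq_one_iff hc, ← Set.preimage_univ (f := Prod.snd),
    ← Measure.map_apply measurable_snd .univ, map_snd_withExpDensity_kernMeas hc]
  simp only [hfib, withDensity_const, one_smul, measure_univ]

lemma ae_integral_exp_eq_one [IsFiniteMeasure Q] {c : X × Y → ℝ} (hc : Measurable c)
    (hmarg : (withExpDensity (kernMeas κ Q) c).map Prod.snd = Q) :
    ∀ᵐ y ∂Q, ∫ x, Real.exp (c (x, y)) ∂κ y = 1 := by
  have hmeas : Measurable fun y => withExpDensity (κ y) (fun x => c (x, y)) Set.univ := by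
    simp only [withExpDensity, withDensity_apply _ MeasurableSet.univ, Measure.restrict_univ]
    exact hc.exp.ennreal_ofReal.lintegral_kernel_prod_left'
  have hone : (fun y => withExpDensity (κ y) (fun x => c (x, y)) Set.univ) =ᵐ[Q] 1 := by
    refine (withDensity_eq_iff_of_sigmaFinite hmeas.aemeasurable aemeasurable_const).1 ?_
    rw [← map_snd_withExpDensity_kernMeas hc, hmarg]
    exact withDensity_one.symm
  filter_upwards [hone] with y hy
  exact (integral_exp_eq_one_iff (hc.comp measurable_prodMk_right)).2 hy

lemma exists_normalized_eq_on_ae_fibre {c : X × Y → ℝ} (hc : Measurable c)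
    (hnorm : ∀ᵐ y ∂Q, ∫ x, Real.exp (c (x, y)) ∂κ y = 1) :
    ∃ c' : X × Y → ℝ, Measurable c' ∧ (∀ y, ∫ x, Real.exp (c' (x, y)) ∂κ y = 1) ∧
      ∀ᵐ y ∂Q, ∀ x, c' (x, y) = c (x, y) := by
  obtain ⟨G, hGQ, hG, hGnorm⟩ := hnorm.exists_measurable_mem
  refine ⟨(Prod.snd ⁻¹' G).indicator c, hc.indicator (measurable_snd hG), fun y => ?_, ?_⟩
  · by_cases hy : y ∈ G
    · simpa [hy] using hGnorm y hy
    · simp [hy]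
  · filter_upwards [hGQ] with y hy x
    simp [hy]

theorem Hker_eq_neg_klDiv (κ : Kernel Y X) [IsMarkovKernel κ] (π : Measure (X × Y))
    [IsProbabilityMeasure π] :
    Hker κ π = -(klDiv π (kernMeas κ (π.map Prod.snd)) : EReal) := by
  have : IsProbabilityMeasure (π.map Prod.snd) :=
    Measure.isProbabilityMeasure_map measurable_snd.aemeasurable
  refine congrArg Neg.neg (le_antisymm (sSup_le ?_) ?_)
  · rintro _ ⟨c, hc, hnorm, -, rfl⟩
    exact eInt_le_klDiv (integral_exp_kernMeas_eq_one hc hnorm)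
  · refine EReal.ge_of_forall_gt_iff_ge.1 fun z hz => ?_
    obtain ⟨c, hc, hwd, hzc, a, b, -, -, hab, hseg⟩ := exists_le_eInt hz
    have hmarg : (withExpDensity (kernMeas κ (π.map Prod.snd)) c).map Prod.snd
        = π.map Prod.snd := by
      rw [← hseg, Measure.map_add _ _ measurable_snd, Measure.map_smul, Measure.map_smul,
        map_snd_kernMeas, ← add_smul, hab, one_smul]
    obtain ⟨c', hc', hnorm, heq⟩ :=
      exists_normalized_eq_on_ae_fibre hc (ae_integral_exp_eq_one hc hmarg)
    have heq' : c' =ᵐ[π] c :=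
      (ae_of_ae_map measurable_snd.aemeasurable heq).mono fun w hw => hw w.1
    have hwd' : IntWellDef π c' := (intWellDef_congr_ae heq').2 hwd
    exact (hzc.trans (eInt_mono_ae heq'.symm.le)).trans (le_sSup ⟨c', hc', hnorm, hwd', rfl⟩)

theorem Hnu_eq_neg_klDiv (ν : Measure X) [IsProbabilityMeasure ν] (π : Measure (X × Y))
    [IsProbabilityMeasure π] : Hnu ν π = -(klDiv π (ν.prod (π.map Prod.snd)) : EReal) := by
  rw [← kernMeas_const]
  exact Hker_eq_neg_klDiv (Kernel.const Y ν) π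

end Kernel

section ChainRule

variable {X Y : Type*} [MeasurableSpace X] [MeasurableSpace Y] {π : Measure (X × Y)}
  {ν : Measure X} {κ : Kernel X Y}

lemma absolutelyContinuous_fst_compProd [SFinite π] [SFinite ν] [IsSFiniteKernel κ]
    (hac : π ≪ ν ⊗ₘ κ) : π ≪ π.fst ⊗ₘ κ := by
  refine Measure.AbsolutelyContinuous.mk fun s hs hnull => ?_
  have hfib : Measurable fun x => κ x (Prod.mk x ⁻¹' s) := Kernel.measurable_kernel_prodMk_left hs
  rw [Measure.compProd_apply hs, lintegral_eq_zero_iff hfib] at hnull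
  set B : Set X := {x | κ x (Prod.mk x ⁻¹' s) = 0}
  have hB : MeasurableSet B := hfib (measurableSet_singleton 0)
  have hB_ae : ∀ᵐ z ∂π, z ∈ Prod.fst ⁻¹' B := ae_of_ae_map measurable_fst.aemeasurable hnull
  have hsB : (ν ⊗ₘ κ) (s ∩ Prod.fst ⁻¹' B) = 0 := by
    rw [Measure.compProd_apply (hs.inter (measurable_fst hB))]
    refine (lintegral_congr fun x => ?_).trans lintegral_zero
    by_cases hx : x ∈ B
    · exact measure_mono_null (fun y hy => hy.1) hx
    · exact measure_mono_null (fun y hy => hx hy.2) measure_empty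
  exact (measure_inter_conull hB_ae).symm.trans (hac hsB)

variable [IsFiniteMeasure π] [IsFiniteMeasure ν] [IsMarkovKernel κ]

lemma absolutelyContinuous_compProd_iff_fst :
    π ≪ ν ⊗ₘ κ ↔ π.fst ≪ ν ∧ π ≪ π.fst ⊗ₘ κ := by
  refine ⟨fun hac => ⟨?_, absolutelyContinuous_fst_compProd hac⟩,
    fun h => h.2.trans (h.1.compProd_left κ)⟩
  rw [← Measure.fst_compProd ν κ]
  exact hac.map measurable_fst

lemma llr_compProd_eq_add (hac : π ≪ ν ⊗ₘ κ) :
    llr π (ν ⊗ₘ κ) =ᵐ[π] fun z => llr π.fst ν z.1 + llr π (π.fst ⊗ₘ κ) z := by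
  obtain ⟨hac_fst, hac_cond⟩ := absolutelyContinuous_compProd_iff_fst.1 hac
  have hpos_fst : ∀ᵐ z ∂π, 0 < π.fst.rnDeriv ν z.1 :=
    ae_of_ae_map measurable_fst.aemeasurable (Measure.rnDeriv_pos hac_fst)
  have hlt_fst : ∀ᵐ z ∂π, π.fst.rnDeriv ν z.1 < ⊤ :=
    ae_of_ae_map measurable_fst.aemeasurable (hac_fst.ae_le (Measure.rnDeriv_lt_top π.fst ν))
  filter_upwards [hac.ae_le (Measure.rnDeriv_mul_rnDeriv hac_cond),
    hac.ae_le (rnDeriv_measure_compProd_left π.fst ν κ), hpos_fst, hlt_fst,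
    Measure.rnDeriv_pos hac_cond, hac_cond.ae_le (Measure.rnDeriv_lt_top π (π.fst ⊗ₘ κ))]
    with z hmul hfst hpos_fst hlt_fst hpos_cond hlt_cond
  have hne_fst : (π.fst.rnDeriv ν z.1).toReal ≠ 0 :=
    (ENNReal.toReal_pos hpos_fst.ne' hlt_fst.ne).ne'
  have hne_cond : (π.rnDeriv (π.fst ⊗ₘ κ) z).toReal ≠ 0 :=
    (ENNReal.toReal_pos hpos_cond.ne' hlt_cond.ne).ne'
  rw [llr, ← hmul, Pi.mul_apply, hfst, mul_comm, ENNReal.toReal_mul,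
    Real.log_mul hne_fst hne_cond, llr, llr]

lemma klDiv_compProd_eq_klDiv_fst_add_of_integrable (hac : π ≪ ν ⊗ₘ κ)
    (hint_fst : Integrable (llr π.fst ν) π.fst) (hint_cond : Integrable (llr π (π.fst ⊗ₘ κ)) π) :
    klDiv π (ν ⊗ₘ κ) = klDiv π.fst ν + klDiv π (π.fst ⊗ₘ κ) := by
  obtain ⟨hac_fst, hac_cond⟩ := absolutelyContinuous_compProd_iff_fst.1 hac
  have hint_comp : Integrable (fun z : X × Y => llr π.fst ν z.1) π :=
    hint_fst.comp_measurable measurable_fst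
  have hint : Integrable (llr π (ν ⊗ₘ κ)) π :=
    (hint_comp.add hint_cond).congr (llr_compProd_eq_add hac).symm
  have hintegral_comp : ∫ z, llr π.fst ν z.1 ∂π = ∫ x, llr π.fst ν x ∂π.fst :=
    (integral_map measurable_fst.aemeasurable hint_fst.aestronglyMeasurable).symm
  have hmass (ρ : Measure X) [SFinite ρ] : (ρ ⊗ₘ κ).real Set.univ = ρ.real Set.univ := by
    rw [measureReal_def, Measure.compProd_apply_univ, measureReal_def]
  rw [klDiv_of_ac_of_integrable hac hint, klDiv_of_ac_of_integrable hac_fst hint_fst,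
    klDiv_of_ac_of_integrable hac_cond hint_cond,
    ← ENNReal.ofReal_add (integral_llr_add_sub_measure_univ_nonneg hac_fst hint_fst)
      (integral_llr_add_sub_measure_univ_nonneg hac_cond hint_cond),
    integral_congr_ae (llr_compProd_eq_add hac), integral_add hint_comp hint_cond, hintegral_comp,
    hmass, hmass]
  ring_nf

theorem klDiv_compProd_eq_klDiv_fst_add :
    klDiv π (ν ⊗ₘ κ) = klDiv π.fst ν + klDiv π (π.fst ⊗ₘ κ) := by
  rcases eq_or_ne (klDiv π.fst ν) ⊤ with htop | hfin
  · have hle : klDiv π.fst (ν ⊗ₘ κ).fst ≤ klDiv π (ν ⊗ₘ κ) :=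
      klDiv_map_le π (ν ⊗ₘ κ) measurable_fst
    rw [Measure.fst_compProd, htop] at hle
    rw [htop, top_add, top_le_iff.1 hle]
  obtain ⟨hac_fst, hint_fst⟩ := klDiv_ne_top_iff.1 hfin
  by_cases hac_cond : π ≪ π.fst ⊗ₘ κ
  · have hac : π ≪ ν ⊗ₘ κ := absolutelyContinuous_compProd_iff_fst.2 ⟨hac_fst, hac_cond⟩
    by_cases hint_cond : Integrable (llr π (π.fst ⊗ₘ κ)) π
    · exact klDiv_compProd_eq_klDiv_fst_add_of_integrable hac hint_fst hint_cond
    · have hint_comp : Integrable (fun z : X × Y => llr π.fst ν z.1) π :=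
        hint_fst.comp_measurable measurable_fst
      have hint : ¬ Integrable (llr π (ν ⊗ₘ κ)) π := fun h => hint_cond
        ((integrable_add_iff_integrable_right' hint_comp).1 (h.congr (llr_compProd_eq_add hac)))
      rw [klDiv_of_not_integrable hint_cond, klDiv_of_not_integrable hint, add_top]
  · have hac : ¬ π ≪ ν ⊗ₘ κ := fun h => hac_cond (absolutelyContinuous_fst_compProd h)
    rw [klDiv_of_not_ac hac_cond, klDiv_of_not_ac hac, add_top]

theorem klDiv_prod_eq_klDiv_fst_add (ρ : Measure Y) [IsProbabilityMeasure ρ] :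
    klDiv π (ν.prod ρ) = klDiv π.fst ν + klDiv π (π.fst.prod ρ) := by
  rw [← Measure.compProd_const, ← Measure.compProd_const, klDiv_compProd_eq_klDiv_fst_add]

end ChainRule

theorem statement9_general {X Y : Type*} [MeasurableSpace X] [MeasurableSpace Y]
    (ν P : Measure X) [IsProbabilityMeasure ν] [IsProbabilityMeasure P]
    (pi : Measure (X × Y)) [IsProbabilityMeasure pi]
    (hP : pi.map Prod.fst = P) (hS : SEnt ν P ≠ ⊥) :
    - Hnu P pi = SEnt ν P - Hnu ν pi
    ∧ KL pi (P.prod (pi.map Prod.snd))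
        = KL pi (ν.prod (pi.map Prod.snd)) - KL P ν := by
  have : IsProbabilityMeasure (pi.map Prod.snd) :=
    Measure.isProbabilityMeasure_map measurable_snd.aemeasurable
  have hchain : (klDiv pi (ν.prod (pi.map Prod.snd)) : EReal)
      = klDiv P ν + klDiv pi (P.prod (pi.map Prod.snd)) := by
    rw [klDiv_prod_eq_klDiv_fst_add, Measure.fst, hP, EReal.coe_ennreal_add]
  rw [SEnt_eq_neg_klDiv] at hS ⊢
  have hfin : klDiv P ν ≠ ⊤ := fun htop => hS (by rw [htop]; rfl)
  have hsub : (klDiv pi (P.prod (pi.map Prod.snd)) : EReal)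
      = klDiv pi (ν.prod (pi.map Prod.snd)) - klDiv P ν := by
    rw [hchain, ← EReal.coe_ennreal_toReal hfin, EReal.add_sub_cancel_left]
  refine ⟨?_, by rw [KL_eq_coe_klDiv, KL_eq_coe_klDiv, KL_eq_coe_klDiv, hsub]⟩
  rw [Hnu_eq_neg_klDiv, Hnu_eq_neg_klDiv, neg_neg, hsub, sub_eq_add_neg (-_), neg_neg, add_comm,
    ← sub_eq_add_neg]

/-- if `S^ν(P)` and `H^ν(π)` are finite, then
`IG(π, P) := −H^P(π) = S^ν(P) − H^ν(π)`; equivalently, with `Q` the `y`-marginal of `π`,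
`D_KL(π | P × Q) = D_KL(π | ν × Q) − D_KL(P | ν)`. -/
theorem statement9 {X Y : Type*} [MeasurableSpace X] [MeasurableSpace Y]
    (ν P : Measure X) [IsProbabilityMeasure ν] [IsProbabilityMeasure P]
    (pi : Measure (X × Y)) [IsProbabilityMeasure pi]
    (hP : pi.map Prod.fst = P)
    (hS1 : SEnt ν P ≠ ⊥) (hS2 : SEnt ν P ≠ ⊤)
    (hH1 : Hnu ν pi ≠ ⊥) (hH2 : Hnu ν pi ≠ ⊤) :
    - Hnu P pi = SEnt ν P - Hnu ν pi
    ∧ KL pi (P.prod (pi.map Prod.snd))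
        = KL pi (ν.prod (pi.map Prod.snd)) - KL P ν :=
  statement9_general ν P pi hP hS1

end
end
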